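/- ψ(−1/8) = −γ + 8 + (1 + √2)·(π/2) − 4·ln 2 − √2·ln(1 + √2), where ψ is the digamma function and γ is the Euler–Mascheroni constant. -/

import Mathlib

noncomputable def digamma (x : ℝ) : ℝ := deriv Real.Gamma x / Real.Gamma x

open Real Filter Topology

lemma dg_diff {x : ℝ} (hx : 0 < x) : DifferentiableAt ℝ Real.Gamma x :=
  Real.differentiableAt_Gamma (fun m => by have : (0:ℝ) ≤ m := m.cast_nonneg; linarith)

lemma dg_hasDeriv {x : ℝ} (hx : 0 < x) :
    HasDerivAt (Real.log ∘ Real.Gamma) (digamma x) x :=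
  (dg_diff hx).hasDerivAt.log (Real.Gamma_pos_of_pos hx).ne'

lemma dg_add_one' {x : ℝ} (hx : ∀ m : ℕ, x ≠ -m) :
    digamma (x + 1) = digamma x + 1 / x := by
  have hx0 : x ≠ 0 := by simpa using hx 0
  have hG : Real.Gamma x ≠ 0 := Real.Gamma_ne_zero hx
  have hd : HasDerivAt Real.Gamma (deriv Real.Gamma (x+1)) (x+1) := by
    apply DifferentiableAt.hasDerivAt
    apply Real.differentiableAt_Gamma
    intro m hm
    apply hx (m+1)
    push_cast; linarith
  have h1 : HasDerivAt (fun y => Real.Gamma (y+1)) (deriv Real.Gamma (x+1)) x :=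
    HasDerivAt.comp_add_const x 1 hd
  have h2 : HasDerivAt (fun y => y * Real.Gamma y)
      (1 * Real.Gamma x + x * deriv Real.Gamma x) x :=
    (hasDerivAt_id x).mul (Real.differentiableAt_Gamma hx).hasDerivAt
  have h3 : (fun y => Real.Gamma (y+1)) =ᶠ[𝓝 x] (fun y => y * Real.Gamma y) := by
    filter_upwards [eventually_ne_nhds hx0] with y hy
    exact Real.Gamma_add_one hy
  have h4 := h1.unique (h2.congr_of_eventuallyEq h3)
  unfold digamma
  rw [h4, Real.Gamma_add_one hx0]
  field_simp
  ring

lemma dg_add_nat {x : ℝ} (hx : 0 < x) (n : ℕ) :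
    digamma (x + n) = digamma x + ∑ k ∈ Finset.range n, 1 / (x + k) := by
  induction n with
  | zero => simp
  | succ n ih =>
    have h : ∀ m : ℕ, x + n ≠ -m := fun m => by
      have : (0:ℝ) ≤ m := m.cast_nonneg
      have : (0:ℝ) ≤ n := n.cast_nonneg
      linarith
    rw [Finset.sum_range_succ, ← add_assoc, ← ih, ← dg_add_one' h]
    push_cast; ring_nf

lemma dg_mono {x y : ℝ} (hx : 0 < x) (hxy : x ≤ y) : digamma x ≤ digamma y := by
  have h := Real.convexOn_log_Gamma.monotoneOn_deriv
    (fun z hz => (dg_hasDeriv hz).differentiableAt)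
  have := h (show x ∈ Set.Ioi 0 from hx) (show y ∈ Set.Ioi 0 from lt_of_lt_of_le hx hxy) hxy
  rwa [(dg_hasDeriv hx).deriv, (dg_hasDeriv (lt_of_lt_of_le hx hxy)).deriv] at this

lemma dg_one : digamma 1 = -Real.eulerMascheroniConstant := by
  unfold digamma
  rw [Real.hasDerivAt_Gamma_one.deriv]; simp

lemma dg_tendsto : Tendsto (fun n : ℕ => ∑ k ∈ Finset.range n, (1 / (1 + (k:ℝ)) - 1 / (7/8 + (k:ℝ))))
    atTop (𝓝 (digamma (7/8) + Real.eulerMascheroniConstant)) := by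
  have key : ∀ n : ℕ, 1 ≤ n →
      |∑ k ∈ Finset.range n, (1 / (1 + (k:ℝ)) - 1 / (7/8 + (k:ℝ))) -
        (digamma (7/8) + Real.eulerMascheroniConstant)| ≤ 1 / (n:ℝ) := by
    intro n hn
    have hn' : (1:ℝ) ≤ n := by exact_mod_cast hn
    have h1 := dg_add_nat (x := 7/8) (by norm_num) n
    have h2 := dg_add_nat (x := 1) (by norm_num) n
    have h3 : digamma (n + 1) = digamma n + 1 / n := dg_add_one' (fun m => by
      have : (0:ℝ) ≤ m := m.cast_nonneg
      linarith)
    have h4 : digamma n ≤ digamma (7/8 + n) := dg_mono (by linarith) (by linarith)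
    have h5 : digamma (7/8 + n) ≤ digamma (1 + n) := dg_mono (by linarith) (by linarith)
    rw [dg_one] at h2
    rw [add_comm (n:ℝ) 1] at h3
    rw [Finset.sum_sub_distrib, abs_le]
    constructor <;> linarith [show (0:ℝ) ≤ 1 / n by positivity]
  rw [tendsto_iff_norm_sub_tendsto_zero]
  refine squeeze_zero' (Eventually.of_forall fun _ => norm_nonneg _) ?_
    tendsto_one_div_atTop_nhds_zero_nat
  filter_upwards [eventually_ge_atTop 1] with n hn
  exact key n hn

noncomputable def dgG (t : ℝ) : ℝ :=
  -2 * log (1 + t) - log (1 + t^2) + 2 * arctan t - log (1 + t^4)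
    + √2 * (arctan (√2 * t + 1) + arctan (√2 * t - 1))
    - (√2 / 2) * (log (1 + √2 * t + t^2) - log (1 - √2 * t + t^2))

lemma dgG_zero : dgG 0 = 0 := by
  simp [dgG, arctan_neg]

lemma dgG_one : dgG 1 = (1 + √2) * (π / 2) - 4 * log 2 - √2 * log (1 + √2) := by
  have h2 : √2 * √2 = 2 := Real.mul_self_sqrt (by norm_num)
  have hs : 1 < √2 := by rw [Real.lt_sqrt] <;> norm_num
  have e : √2 - 1 = (√2 + 1)⁻¹ := by
    apply eq_inv_of_mul_eq_one_left; linarith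
  have h3 : arctan (√2 - 1) = π / 2 - arctan (√2 + 1) := by
    rw [e]; exact arctan_inv_of_pos (by positivity)
  have h4 : log (1 + √2 + 1) = log (2 - √2) + 2 * log (1 + √2) := by
    have : 0 < 2 - √2 := by nlinarith
    rw [← log_rpow (by positivity), ← log_mul this.ne' (by positivity)]
    congr 1
    norm_num
    nlinarith
  unfold dgG
  rw [show (1:ℝ) - √2 * 1 + 1^2 = 2 - √2 by ring]
  simp only [mul_one, one_pow, h3, h4, arctan_one]
  norm_num
  ring

lemma dgG_deriv {t : ℝ} (ht : 0 ≤ t) :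
    HasDerivAt dgG (-8 * t^6 / ((1+t)*(1+t^2)*(1+t^4))) t := by
  have h2 : √2 ^ 2 = 2 := Real.sq_sqrt (by norm_num)
  have p1 : 0 < 1 + √2 * t + t^2 := by positivity
  have p2 : 0 < 1 - √2 * t + t^2 := by nlinarith [sq_nonneg (t - √2/2)]
  have d1 : HasDerivAt (fun t : ℝ => log (1 + t)) (1 / (1+t)) t :=
    ((hasDerivAt_id t).const_add 1).log (by simp; positivity)
  have d2 : HasDerivAt (fun t : ℝ => log (1 + t^2)) (2 * t / (1+t^2)) t := by
    simpa using ((hasDerivAt_pow 2 t).const_add 1).log (by positivity)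
  have d4 : HasDerivAt (fun t : ℝ => log (1 + t^4)) (4 * t^3 / (1+t^4)) t := by
    simpa using ((hasDerivAt_pow 4 t).const_add 1).log (by positivity)
  have l : HasDerivAt (fun t : ℝ => √2 * t) (√2) t := by
    simpa using (hasDerivAt_id t).const_mul (√2)
  have a1 := (l.add_const 1).arctan
  have a2 := (l.sub_const 1).arctan
  have d5 : HasDerivAt (fun t : ℝ => log (1 + √2 * t + t^2)) ((√2 + 2 * t) / (1 + √2 * t + t^2)) t := by
    simpa using ((l.const_add 1).add (hasDerivAt_pow 2 t)).log p1.ne'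
  have d6 : HasDerivAt (fun t : ℝ => log (1 - √2 * t + t^2)) ((-√2 + 2 * t) / (1 - √2 * t + t^2)) t := by
    simpa using ((l.const_sub 1).add (hasDerivAt_pow 2 t)).log p2.ne'
  have D := (((((d1.const_mul (-2)).sub d2).add ((hasDerivAt_arctan t).const_mul 2)).sub d4).add
    ((a1.add a2).const_mul (√2))).sub ((d5.sub d6).const_mul (√2/2))
  refine D.congr_deriv ?_
  have q1 : 1 + (√2 * t + 1)^2 = 2 * (1 + √2 * t + t^2) := by linear_combination t^2 * h2
  have q2 : 1 + (√2 * t - 1)^2 = 2 * (1 - √2 * t + t^2) := by linear_combination t^2 * h2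
  have q3 : (1 + √2 * t + t^2) * (1 - √2 * t + t^2) = 1 + t^4 := by linear_combination -t^2 * h2
  have r1 : √2 * (1 / (1 + (√2 * t + 1)^2) * √2 + 1 / (1 + (√2 * t - 1)^2) * √2)
      - √2/2 * ((√2 + 2 * t) / (1 + √2 * t + t^2) - (-√2 + 2 * t) / (1 - √2 * t + t^2))
      = 4 * t^2 / (1+t^4) := by
    rw [q1, q2, ← q3]
    field_simp
    ring_nf
    rw [h2]; ring
  have r2 : -2 * (1 / (1+t)) - 2 * t / (1+t^2) + 2 * (1 / (1+t^2)) - 4 * t^3/(1+t^4)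
      + 4 * t^2 / (1+t^4) = -8 * t^6 / ((1+t)*(1+t^2)*(1+t^4)) := by
    have : 1 + t ≠ 0 := by positivity
    field_simp
    ring
  rw [← r2, ← r1]
  ring

noncomputable def dgR (N : ℕ) (t : ℝ) : ℝ :=
  dgG t - ∑ k ∈ Finset.range N, (t^(8*k+8) / (1+(k:ℝ)) - t^(8*k+7) / (7/8+(k:ℝ)))

lemma dgR_deriv (N : ℕ) {t : ℝ} (ht : 0 ≤ t) :
    HasDerivAt (dgR N) (-8 * t^6 / ((1+t)*(1+t^2)*(1+t^4)) * t^(8*N)) t := by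
  have hs : HasDerivAt (fun t : ℝ => ∑ k ∈ Finset.range N,
      (t^(8*k+8) / (1+(k:ℝ)) - t^(8*k+7) / (7/8+(k:ℝ))))
      (∑ k ∈ Finset.range N, (8 * t^(8*k+7) - 8 * t^(8*k+6))) t := by
    apply HasDerivAt.fun_sum
    intro k _
    refine (((hasDerivAt_pow (8*k+8) t).div_const _).sub
      ((hasDerivAt_pow (8*k+7) t).div_const _)).congr_deriv ?_
    have : (0:ℝ) ≤ k := k.cast_nonneg
    rw [show 8*k+8-1 = 8*k+7 by omega, show 8*k+7-1=8*k+6 by omega]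
    push_cast
    field_simp
    ring
  refine ((dgG_deriv ht).sub hs).congr_deriv ?_
  have : 1 + t ≠ 0 := by positivity
  clear hs
  induction N with
  | zero => simp
  | succ N ih =>
    rw [Finset.sum_range_succ, ← sub_sub, ih, show 8 * (N+1) = 8*N+8 by ring,
      pow_add t (8*N) 7, pow_add t (8*N) 6, pow_add t (8*N) 8]
    generalize t^(8*N) = u
    field_simp
    ring

lemma dgR_bound (N : ℕ) : ‖dgR N 1‖ ≤ 8 / (8 * N + 1) := by
  have h0 : dgR N 0 = 0 := by simp [dgR, dgG_zero]
  have hB : ∀ t : ℝ, HasDerivAt (fun t : ℝ => 8 * t^(8*N+1) / (8*N+1)) (8 * t^(8*N)) t := by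
    intro t
    refine (((hasDerivAt_pow (8*N+1) t).const_mul 8).div_const _).congr_deriv ?_
    simp only [Nat.add_sub_cancel]
    push_cast
    field_simp
  have := image_norm_le_of_norm_deriv_right_le_deriv_boundary (f := dgR N) (a := 0) (b := 1)
    (fun t ht => (dgR_deriv N ht.1).continuousAt.continuousWithinAt)
    (fun t ht => (dgR_deriv N ht.1).hasDerivWithinAt)
    (B := fun t : ℝ => 8 * t^(8*N+1) / (8*N+1)) (by simp [h0]) hB
    (fun t ht => by
      have h := ht.1
      rw [norm_mul, norm_div, norm_mul, Real.norm_of_nonneg (show 0 ≤ t^6 by positivity),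
        Real.norm_of_nonneg (show 0 ≤ t^(8*N) by positivity),
        Real.norm_of_nonneg (show 0 ≤ (1+t)*(1+t^2)*(1+t^4) by positivity)]
      gcongr
      norm_num
      rw [div_le_iff₀ (by positivity)]
      have : t^6 ≤ 1 := pow_le_one₀ h ht.2.le
      have : 1 ≤ (1+t)*(1+t^2)*(1+t^4) :=
        one_le_mul_of_one_le_of_one_le (one_le_mul_of_one_le_of_one_le (by linarith)
          (by nlinarith)) (by linarith [show 0 ≤ t^4 by positivity])
      linarith)
    (show (1:ℝ) ∈ Set.Icc 0 1 by simp)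
  simpa using this

lemma dg_tendsto2 : Tendsto (fun n : ℕ => ∑ k ∈ Finset.range n, (1 / (1 + (k:ℝ)) - 1 / (7/8 + (k:ℝ))))
    atTop (𝓝 (dgG 1)) := by
  rw [tendsto_iff_norm_sub_tendsto_zero]
  refine squeeze_zero' (Eventually.of_forall fun _ => norm_nonneg _) ?_
    tendsto_one_div_atTop_nhds_zero_nat
  filter_upwards [eventually_ge_atTop 1] with n hn
  have hn' : (1:ℝ) ≤ n := by exact_mod_cast hn
  have h := dgR_bound n
  rw [norm_sub_rev]
  simp only [dgR, one_pow] at h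
  refine h.trans ?_
  rw [div_le_div_iff₀ (by positivity) (by positivity)]
  linarith

theorem digamma_neg_one_eighth :
    digamma (-(1 / 8)) =
      -Real.eulerMascheroniConstant + 8 + (1 + Real.sqrt 2) * (Real.pi / 2)
        - 4 * Real.log 2 - Real.sqrt 2 * Real.log (1 + Real.sqrt 2) := by
  have h := tendsto_nhds_unique dg_tendsto dg_tendsto2
  rw [dgG_one] at h
  have h2 := dg_add_one' (x := -(1/8)) (fun m hm => by
    have : (8 * m : ℝ) = 1 := by linarith
    have : 8 * m = 1 := by exact_mod_cast this
    omega)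
  rw [show (-(1/8) + 1 : ℝ) = 7/8 by norm_num] at h2
  norm_num at h2 ⊢
  linarith
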